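/- arXiv:math/0410283 — 4 statements merged into one kernel-verified Lean document; each statement's English description precedes it below -/
import Mathlib

section
/- Let (C_1, …, C_n) be a torsion n-tuple in an abelian category C. Then for every i with 1 ≤ i ≤ n−1, the pair ([C_1, …, C_i], [C_{i+1}, …, C_n]) is a torsion pair in C (i.e. a torsion 2-tuple). -/
open CategoryTheory CategoryTheory.Limits

universe u v

variable {C : Type u} [Category.{v} C] [Abelian C]

/-- A class of objects is closed under isomorphism. -/
def IsoClosed (S : Set C) : Prop :=
  ∀ ⦃X Y : C⦄, (X ≅ Y) → X ∈ S → Y ∈ S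

/-- A torsion pair `(𝒯, ℱ)` in an abelian category: both classes are closed under
isomorphism, there are no nonzero morphisms from `𝒯` to `ℱ`, and every object `X` fits
into a short exact sequence `0 → T → X → F → 0` with `T ∈ 𝒯`, `F ∈ ℱ`. -/
structure IsTorsionPair (𝒯 ℱ : Set C) : Prop where
  isoClosed_torsion : IsoClosed 𝒯
  isoClosed_free : IsoClosed ℱ
  hom_zero : ∀ ⦃X Y : C⦄, X ∈ 𝒯 → Y ∈ ℱ → ∀ f : X ⟶ Y, f = 0
  exists_ses : ∀ X : C, ∃ (T F : C) (i : T ⟶ X) (p : X ⟶ F) (w : i ≫ p = 0),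
    T ∈ 𝒯 ∧ F ∈ ℱ ∧ (ShortComplex.mk i p w).ShortExact


/-- There are no nonzero morphisms from objects of `𝒮` to objects of `𝒯`. -/
def HomOrth (𝒮 𝒯 : Set C) : Prop :=
  ∀ ⦃X Y : C⦄, X ∈ 𝒮 → Y ∈ 𝒯 → ∀ f : X ⟶ Y, f = 0

/-- `FiltClass [C₁, …, Cₖ]` is the class of objects `X` admitting a filtration
`0 = X₀ ≤ X₁ ≤ … ≤ Xₖ = X` with `Xⱼ/Xⱼ₋₁ ∈ Cⱼ`, expressed recursively: `X` sits in a
short exact sequence `0 → A → X → B → 0` with `A ∈ C₁` and `B` filtered by the rest. -/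
def FiltClass : List (Set C) → Set C
  | [] => {X : C | IsZero X}
  | 𝒮 :: rest => {X : C | ∃ (A B : C) (i : A ⟶ X) (p : X ⟶ B) (w : i ≫ p = 0),
      A ∈ 𝒮 ∧ B ∈ FiltClass rest ∧ (ShortComplex.mk i p w).ShortExact}

/-- A torsion `n`-tuple `(C₁, …, Cₙ)` in an abelian category, given as a list of classes
of objects: each class is closed under isomorphism, `Hom(Cᵢ, Cⱼ) = 0` for `i < j`, and
every object of `C` admits a filtration with subsequent quotients in `C₁, …, Cₙ`. -/
structure IsTorsionTuple (L : List (Set C)) : Prop where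
  isoClosed : ∀ S ∈ L, IsoClosed S
  homOrth : L.Pairwise HomOrth
  filt_univ : FiltClass L = Set.univ

/-!
Filtering `X` by the classes in `L₁ ++ L₂` first exhibits `X` as an iterated extension bracketed to
the right. Rebracketing reduces to the associativity of forming extensions: if `A ↣ X ↠ B` and
`T ↣ B ↠ F` are short exact, then the preimage `P` of `T` in `X` gives short exact sequences
`A ↣ P ↠ T` and `P ↣ X ↠ F`. Orthogonality passes to filtered objects because a morphism out of
(into) an extension vanishes as soon as it vanishes on the subobject and on the quotient.
-/

section ShortExact

open ZeroObject in
theorem shortExact_zero_id (X : C) :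
    (ShortComplex.mk (0 : (0 : C) ⟶ X) (𝟙 X) zero_comp).ShortExact :=
  .mk' ((ShortComplex.exact_iff_mono _ rfl).2 (inferInstanceAs (Mono (𝟙 X))))
    inferInstance (inferInstanceAs (Epi (𝟙 X)))

variable {A X B P T F : C} {i : A ⟶ X} {p : X ⟶ B} {j : T ⟶ B} {r : B ⟶ F}
  {fst : P ⟶ X} {snd : P ⟶ T}

theorem shortExact_lift_snd_of_isPullback {w : i ≫ p = 0}
    (h : (ShortComplex.mk i p w).ShortExact) (sq : IsPullback fst snd p j) :
    (ShortComplex.mk (sq.lift i 0 (by rw [w, zero_comp])) snd (sq.lift_snd ..)).ShortExact := by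
  have : Mono i := h.mono_f
  have : Epi p := h.epi_g
  have mono_lift : Mono (sq.lift i 0 (by rw [w, zero_comp])) :=
    mono_of_mono_fac (sq.lift_fst ..)
  have epi_snd : Epi snd := (MorphismProperty.epimorphisms C).of_isPullback sq ‹Epi p›
  refine .mk' (ShortComplex.exact_of_f_is_kernel _ ?_) mono_lift epi_snd
  refine KernelFork.IsLimit.ofι' _ _ fun {W} k (hk : k ≫ snd = 0) ↦ ?_
  have fst_comp : (k ≫ fst) ≫ p = 0 := by
    rw [Category.assoc, sq.w, reassoc_of% hk, zero_comp]
  refine ⟨h.exact.lift _ fst_comp, sq.hom_ext ?_ ?_⟩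
  · rw [Category.assoc, sq.lift_fst]
    exact h.exact.lift_f _ fst_comp
  · rw [Category.assoc, sq.lift_snd, comp_zero, hk]

theorem shortExact_fst_comp_of_isPullback [Epi p] {w : j ≫ r = 0}
    (h : (ShortComplex.mk j r w).ShortExact) (sq : IsPullback fst snd p j) :
    (ShortComplex.mk fst (p ≫ r) (by rw [sq.w_assoc, w, comp_zero])).ShortExact := by
  have : Mono j := h.mono_f
  have : Epi r := h.epi_g
  have mono_fst : Mono fst := (MorphismProperty.monomorphisms C).of_isPullback sq.flip ‹Mono j›
  refine .mk' (ShortComplex.exact_of_f_is_kernel _ ?_) mono_fst (epi_comp p r)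
  refine KernelFork.IsLimit.ofι' _ _ fun {W} k (hk : k ≫ p ≫ r = 0) ↦ ?_
  have comp_r : (k ≫ p) ≫ r = 0 := by rw [Category.assoc, hk]
  have lift_j : h.exact.lift _ comp_r ≫ j = k ≫ p := h.exact.lift_f _ comp_r
  exact ⟨sq.lift k _ lift_j.symm, sq.lift_fst ..⟩

end ShortExact

/-- The class `[𝒮, 𝒯]` of extensions of objects of `𝒯` by objects of `𝒮`, the binary operation
which `FiltClass` iterates: the subobject lies in `𝒮` and the quotient in `𝒯`. -/
def ExtensionClass (𝒮 𝒯 : Set C) : Set C :=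
  {X : C | ∃ (A B : C) (i : A ⟶ X) (p : X ⟶ B) (w : i ≫ p = 0),
    A ∈ 𝒮 ∧ B ∈ 𝒯 ∧ (ShortComplex.mk i p w).ShortExact}

section ExtensionClass

variable {𝒮 𝒯 𝒯' 𝒰 : Set C}

theorem isoClosed_extensionClass : IsoClosed (ExtensionClass 𝒮 𝒯) := by
  rintro X Y e ⟨A, B, i, p, w, hA, hB, hs⟩
  have w' : (i ≫ e.hom) ≫ e.inv ≫ p = 0 := by simp [w]
  refine ⟨A, B, i ≫ e.hom, e.inv ≫ p, w', hA, hB, ?_⟩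
  exact ShortComplex.shortExact_of_iso (ShortComplex.isoMk (Iso.refl A) e (Iso.refl B)) hs

theorem extensionClass_mono_right (h : 𝒯 ⊆ 𝒯') :
    ExtensionClass 𝒮 𝒯 ⊆ ExtensionClass 𝒮 𝒯' := by
  rintro X ⟨A, B, i, p, w, hA, hB, hs⟩
  exact ⟨A, B, i, p, w, hA, h hB, hs⟩

theorem subset_extensionClass_isZero_left : 𝒯 ⊆ ExtensionClass {X : C | IsZero X} 𝒯 :=
  fun X hX ↦ ⟨_, X, _, _, _, isZero_zero C, hX, shortExact_zero_id X⟩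

theorem extensionClass_assoc_subset :
    ExtensionClass 𝒮 (ExtensionClass 𝒯 𝒰) ⊆ ExtensionClass (ExtensionClass 𝒮 𝒯) 𝒰 := by
  rintro X ⟨A, B, i, p, w, hA, ⟨T, F, j, r, w', hT, hF, hB⟩, hX⟩
  have : Epi p := hX.epi_g
  have sq := IsPullback.of_hasPullback p j
  have pullback_mem : pullback p j ∈ ExtensionClass 𝒮 𝒯 :=
    ⟨A, T, _, _, _, hA, hT, shortExact_lift_snd_of_isPullback hX sq⟩
  exact ⟨_, F, _, _, _, pullback_mem, hF, shortExact_fst_comp_of_isPullback hB sq⟩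

theorem HomOrth.extensionClass_left (h𝒮 : HomOrth 𝒮 𝒰) (h𝒯 : HomOrth 𝒯 𝒰) :
    HomOrth (ExtensionClass 𝒮 𝒯) 𝒰 := by
  rintro X Y ⟨A, B, i, p, w, hA, hB, hs⟩ hY f
  have : Epi p := hs.epi_g
  have comp_f : i ≫ f = 0 := h𝒮 hA hY _
  calc
    f = p ≫ hs.exact.desc f comp_f := (hs.exact.g_desc f comp_f).symm
    _ = 0 := by rw [h𝒯 hB hY (hs.exact.desc f comp_f), comp_zero]

theorem HomOrth.extensionClass_right (h𝒯 : HomOrth 𝒮 𝒯) (h𝒰 : HomOrth 𝒮 𝒰) :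
    HomOrth 𝒮 (ExtensionClass 𝒯 𝒰) := by
  rintro X Y hX ⟨A, B, i, p, w, hA, hB, hs⟩ f
  have : Mono i := hs.mono_f
  have f_comp : f ≫ p = 0 := h𝒰 hX hB _
  calc
    f = hs.exact.lift f f_comp ≫ i := (hs.exact.lift_f f f_comp).symm
    _ = 0 := by rw [h𝒯 hX hA (hs.exact.lift f f_comp), zero_comp]

end ExtensionClass

section FiltClass

variable {𝒮 : Set C} {L L₁ L₂ : List (Set C)}

theorem filtClass_cons : FiltClass (𝒮 :: L) = ExtensionClass 𝒮 (FiltClass L) :=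
  rfl

theorem isoClosed_filtClass : IsoClosed (FiltClass L) := by
  cases L with
  | nil => exact fun X Y e hX ↦ IsZero.of_iso hX e.symm
  | cons 𝒮 L => exact isoClosed_extensionClass

theorem filtClass_append_subset :
    FiltClass (L₁ ++ L₂) ⊆ ExtensionClass (FiltClass L₁) (FiltClass L₂) := by
  induction L₁ with
  | nil => exact subset_extensionClass_isZero_left
  | cons 𝒮 L₁ ih =>
    calc
      FiltClass (𝒮 :: L₁ ++ L₂) = ExtensionClass 𝒮 (FiltClass (L₁ ++ L₂)) := filtClass_cons
      _ ⊆ ExtensionClass 𝒮 (ExtensionClass (FiltClass L₁) (FiltClass L₂)) :=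
        extensionClass_mono_right ih
      _ ⊆ ExtensionClass (FiltClass (𝒮 :: L₁)) (FiltClass L₂) := extensionClass_assoc_subset

theorem HomOrth.filtClass_left (h : ∀ 𝒯 ∈ L, HomOrth 𝒯 𝒮) : HomOrth (FiltClass L) 𝒮 := by
  induction L with
  | nil => exact fun X Y hX _ f ↦ IsZero.eq_zero_of_src hX f
  | cons 𝒯 L ih =>
    obtain ⟨h𝒯, hL⟩ := List.forall_mem_cons.1 h
    exact h𝒯.extensionClass_left (ih hL)

theorem HomOrth.filtClass_right (h : ∀ 𝒯 ∈ L, HomOrth 𝒮 𝒯) : HomOrth 𝒮 (FiltClass L) := by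
  induction L with
  | nil => exact fun X Y _ hY f ↦ IsZero.eq_zero_of_tgt hY f
  | cons 𝒯 L ih =>
    obtain ⟨h𝒯, hL⟩ := List.forall_mem_cons.1 h
    exact h𝒯.extensionClass_right (ih hL)

end FiltClass

theorem stmt3_general {L₁ L₂ : List (Set C)}
    (homOrth : ∀ 𝒮 ∈ L₁, ∀ 𝒯 ∈ L₂, HomOrth 𝒮 𝒯) (filt_univ : FiltClass (L₁ ++ L₂) = Set.univ) :
    IsTorsionPair (FiltClass L₁) (FiltClass L₂) where
  isoClosed_torsion := isoClosed_filtClass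
  isoClosed_free := isoClosed_filtClass
  hom_zero := HomOrth.filtClass_left fun 𝒮 h𝒮 ↦ HomOrth.filtClass_right (homOrth 𝒮 h𝒮)
  exists_ses X := filtClass_append_subset (filt_univ ▸ Set.mem_univ X)

/-- For a torsion `n`-tuple `(C₁, …, Cₙ)` and `1 ≤ i ≤ n - 1`, the pair
`([C₁, …, Cᵢ], [Cᵢ₊₁, …, Cₙ])` is a torsion pair. -/
theorem stmt3 {L₁ L₂ : List (Set C)} (h : IsTorsionTuple (L₁ ++ L₂))
    (h₁ : L₁ ≠ []) (h₂ : L₂ ≠ []) :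
    IsTorsionPair (FiltClass L₁) (FiltClass L₂) :=
  stmt3_general (List.pairwise_append.1 h.homOrth).2.2 h.filt_univ
end

section
/- For z ∈ ℂ one has iz − z ∈ L_sq if and only if z is congruent modulo L_sq to 0 or to (1+i)/2; moreover (1+i)/2 ∉ L_sq. Thus the fixed points of multiplication by i on ℂ/L_sq are exactly two points. -/
/-- The square lattice `L_sq = ℤi + ℤ ⊆ ℂ`. -/
def Lsq : Set ℂ := {z | ∃ m n : ℤ, z = m * Complex.I + n}

/-!
The lattice is the ring `ℤ[i]`, and `iz - z = (i - 1)z`, so modulo the lattice the fixed points of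
multiplication by `i` are the quotients `c / (i - 1)` with `c` running over representatives of
`ℤ[i] / (i - 1)`. Divisibility by `i - 1` is the parity of `re + im`, so `0` and `-1` represent the
two residue classes, and `-1 / (i - 1) = (1 + i) / 2`.
-/

section RingHom

variable {R K : Type*} [Ring R] [Field K] {f : R →+* K} {p : R}

theorem map_mul_mem_range_iff_exists_sub_div_mem_range (hp : f p ≠ 0) {S : Set R}
    (hS : ∀ w, ∃ c ∈ S, p ∣ w - c) (z : K) :
    f p * z ∈ f.range ↔ ∃ c ∈ S, z - f c / f p ∈ f.range := by
  constructor
  · rintro ⟨w, hw⟩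
    obtain ⟨c, hc, v, hv⟩ := hS w
    refine ⟨c, hc, v, mul_left_cancel₀ hp ?_⟩
    calc f p * f v = f w - f c := by rw [← map_mul, ← hv, map_sub]
      _ = f p * (z - f c / f p) := by rw [hw, mul_sub, mul_div_cancel₀ _ hp]
  · rintro ⟨c, -, v, hv⟩
    refine ⟨p * v + c, ?_⟩
    rw [map_add, map_mul, hv, mul_sub, mul_div_cancel₀ _ hp, sub_add_cancel]

theorem map_div_map_mem_range_iff_dvd (hf : Function.Injective f) (hp : f p ≠ 0) (c : R) :
    f c / f p ∈ f.range ↔ p ∣ c := by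
  simp only [RingHom.mem_range, eq_div_iff hp, Dvd.dvd, ← hf.eq_iff (a := c), map_mul,
    mul_comm (f p), eq_comm]

end RingHom

theorem sqrtd_sub_one_dvd_iff_even (w : GaussianInt) :
    (Zsqrtd.sqrtd - 1 : GaussianInt) ∣ w ↔ Even (w.re + w.im) := by
  constructor
  · rintro ⟨v, rfl⟩
    refine ⟨-v.im, ?_⟩
    simp only [Zsqrtd.re_mul, Zsqrtd.im_mul, Zsqrtd.re_sub, Zsqrtd.im_sub, Zsqrtd.re_sqrtd,
      Zsqrtd.im_sqrtd, Zsqrtd.re_one, Zsqrtd.im_one]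
    ring
  · rintro ⟨k, hk⟩
    have re_eq : w.re = -(w.im - k) + k := by linarith
    exact ⟨⟨w.im - k, -k⟩, Zsqrtd.ext (by simpa using re_eq) (by simp)⟩

theorem exists_residue_sqrtd_sub_one_dvd_sub (w : GaussianInt) :
    ∃ c ∈ ({0, -1} : Set GaussianInt), Zsqrtd.sqrtd - 1 ∣ w - c := by
  simp only [Set.mem_insert_iff, Set.mem_singleton_iff, exists_eq_or_imp, exists_eq_left,
    sqrtd_sub_one_dvd_iff_even]
  rcases Int.even_or_odd (w.re + w.im) with h | h
  · left
    simpa using h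
  · right
    simpa [add_right_comm] using h.add_one

theorem Lsq_eq_range_toComplex : Lsq = GaussianInt.toComplex.range := by
  ext z
  constructor
  · rintro ⟨m, n, rfl⟩
    exact ⟨⟨n, m⟩, by rw [GaussianInt.toComplex_def', add_comm]⟩
  · rintro ⟨w, rfl⟩
    exact ⟨w.im, w.re, by rw [GaussianInt.toComplex_def, add_comm]⟩

theorem toComplex_sqrtd_sub_one :
    GaussianInt.toComplex (Zsqrtd.sqrtd - 1) = Complex.I - 1 := by
  simp [GaussianInt.toComplex_def, neg_add_eq_sub]

theorem I_sub_one_ne_zero : Complex.I - 1 ≠ 0 := by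
  simp [Complex.ext_iff]

theorem neg_one_div_I_sub_one : -1 / (Complex.I - 1) = (1 + Complex.I) / 2 := by
  rw [div_eq_div_iff I_sub_one_ne_zero two_ne_zero]
  linear_combination -Complex.I_mul_I

/-- For `z ∈ ℂ` one has `iz - z ∈ L_sq` iff `z` is congruent mod `L_sq` to `0` or to
`(1+i)/2`, and `(1+i)/2 ∉ L_sq`; so multiplication by `i` on `ℂ/L_sq` has exactly two
fixed points. -/
theorem stmt9 :
    (∀ z : ℂ, Complex.I * z - z ∈ Lsq ↔
      (z - 0 ∈ Lsq ∨ z - (1 + Complex.I)/2 ∈ Lsq)) ∧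
    (1 + Complex.I)/2 ∉ Lsq := by
  have hp : GaussianInt.toComplex (Zsqrtd.sqrtd - 1) ≠ 0 :=
    toComplex_sqrtd_sub_one ▸ I_sub_one_ne_zero
  have half_eq : (1 + Complex.I) / 2 =
      GaussianInt.toComplex (-1) / GaussianInt.toComplex (Zsqrtd.sqrtd - 1) := by
    rw [toComplex_sqrtd_sub_one, map_neg, map_one, neg_one_div_I_sub_one]
  rw [Lsq_eq_range_toComplex, half_eq]
  simp only [SetLike.mem_coe]
  constructor
  · intro z
    have fixed_eq : Complex.I * z - z = GaussianInt.toComplex (Zsqrtd.sqrtd - 1) * z := by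
      rw [toComplex_sqrtd_sub_one, sub_one_mul]
    rw [fixed_eq, map_mul_mem_range_iff_exists_sub_div_mem_range hp
      exists_residue_sqrtd_sub_one_dvd_sub]
    simp only [Set.mem_insert_iff, Set.mem_singleton_iff, exists_eq_or_imp, exists_eq_left,
      map_zero, zero_div]
  · rw [map_div_map_mem_range_iff_dvd GaussianInt.toComplex_injective hp,
      sqrtd_sub_one_dvd_iff_even]
    decide
end

section
/- Take τ = i and define g : ℤ² → ℤ² by g(m, n) = (n, −m), so that (g·v)_ℂ = i·v_ℂ where v_ℂ = mi + n. Define c : ℤ² → (ℂ → ℂ) by c_v(z) = (1/4)·(c⁰_v(z) + c⁰_{g·v}(iz) + c⁰_{g²·v}(−z) + c⁰_{g³·v}(−iz)). Then: (a) for all v ∈ ℤ² and z ∈ ℂ, c_{g·v}(iz) = c_v(z) (G-invariance); and (b) for all v₁ = (m₁, n₁), v₂ = (m₂, n₂) in ℤ² and z ∈ ℂ, c_{v₁}(z) + c_{v₂}(z + m₁i + n₁) − c_{v₁+v₂}(z) = m₁n₂ − m₂n₁ (the cocycle identity). -/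
/-- The functions `c⁰_{(m,n)}(z) = -2mz - m(mi + n)` (the case `τ = i`). -/
noncomputable def c0 (v : ℤ × ℤ) (z : ℂ) : ℂ :=
  -2 * (v.1 : ℂ) * z - (v.1 : ℂ) * ((v.1 : ℂ) * Complex.I + (v.2 : ℂ))

/-- The generator of `ℤ/4` acting on `ℤ²`: `g(m, n) = (n, -m)`, so that
`(g·v)_ℂ = i·v_ℂ` where `(m, n)_ℂ = mi + n`. -/
def g (v : ℤ × ℤ) : ℤ × ℤ := (v.2, -v.1)

/-- The averaged functions `c_v(z) = (1/4)·∑_{k=0}^{3} c⁰_{gᵏv}(iᵏz)`. -/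
noncomputable def c (v : ℤ × ℤ) (z : ℂ) : ℂ :=
  (1/4) * (c0 v z + c0 (g v) (Complex.I * z) + c0 (g (g v)) (-z)
    + c0 (g (g (g v))) (-Complex.I * z))

/-!
The functions `c` are the averages of `c0` over the action of `ℤ/4` generated by
`(v, z) ↦ (g v, iz)`, so they are invariant. The coboundary of `c0` is already the determinant
`m₁n₂ - m₂n₁`. Since `g` is additive and becomes multiplication by `i` on `ℂ`, forming the
coboundary commutes with averaging, and averaging leaves the determinant unchanged because `g`
preserves it.
-/

open Function

section BirkhoffAverage

variable (R : Type*) {α β M : Type*} [DivisionSemiring R]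

theorem birkhoffAverage_comp_of_semiconj [AddCommMonoid M] [Module R M] {π : α → β} {S : α → α}
    {T : β → β} (h : Semiconj π S T) (f : β → M) (n : ℕ) :
    birkhoffAverage R S (f ∘ π) n = birkhoffAverage R T f n ∘ π := by
  funext x
  simp only [birkhoffAverage, birkhoffSum, comp_apply, (h.iterate_right _).eq]

theorem birkhoffAverage_apply_of_isPeriodicPt [AddCommGroup M] [Module R M] {T : α → α} {n : ℕ}
    {x : α} (h : IsPeriodicPt T n x) (f : α → M) :
    birkhoffAverage R T f n (T x) = birkhoffAverage R T f n x := by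
  rw [← sub_eq_zero, birkhoffAverage_apply_sub_birkhoffAverage, h.eq, sub_self, smul_zero]

end BirkhoffAverage

section Coboundary

variable {A X E : Type*} [Add A] [Add X] [AddCommGroup E]

/-- The coboundary of a 1-cochain `a ↦ F (a, ·)` on `A` with values in the functions on `X`, where
`a : A` acts on `X` as translation by `ι a`. All arguments are collected in one tuple, so that
`birkhoffAverage` applies both to a cochain and to its coboundary. -/
def coboundary (ι : A → X) (F : A × X → E) : A × A × X → E :=
  fun (a, b, x) ↦ F (a, x) + F (b, x + ι a) - F (a + b, x)

theorem coboundary_birkhoffAverage (R : Type*) [DivisionSemiring R] [Module R E]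
    {ι : A → X} {σ : A → A} {τ : X → X} (hσ : ∀ a b, σ (a + b) = σ a + σ b)
    (hτ : ∀ a x, τ (x + ι a) = τ x + ι (σ a)) (F : A × X → E) (n : ℕ) :
    coboundary ι (birkhoffAverage R (Prod.map σ τ) F n) =
      birkhoffAverage R (Prod.map σ (Prod.map σ τ)) (coboundary ι F) n := by
  let fst : A × A × X → A × X := fun (a, _, x) ↦ (a, x)
  let snd : A × A × X → A × X := fun (a, b, x) ↦ (b, x + ι a)
  let sum : A × A × X → A × X := fun (a, b, x) ↦ (a + b, x)
  have coboundary_eq (G : A × X → E) : coboundary ι G = G ∘ fst + G ∘ snd - G ∘ sum := rfl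
  have fst_semiconj : Semiconj fst (Prod.map σ (Prod.map σ τ)) (Prod.map σ τ) := fun _ ↦ rfl
  have snd_semiconj : Semiconj snd (Prod.map σ (Prod.map σ τ)) (Prod.map σ τ) :=
    fun (a, b, x) ↦ Prod.ext rfl (hτ a x).symm
  have sum_semiconj : Semiconj sum (Prod.map σ (Prod.map σ τ)) (Prod.map σ τ) :=
    fun (a, b, _) ↦ Prod.ext (hσ a b).symm rfl
  simp only [coboundary_eq, birkhoffAverage_sub, birkhoffAverage_add, Pi.sub_apply, Pi.add_apply,
    birkhoffAverage_comp_of_semiconj R fst_semiconj,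
    birkhoffAverage_comp_of_semiconj R snd_semiconj,
    birkhoffAverage_comp_of_semiconj R sum_semiconj]

end Coboundary

/-- The embedding `(m, n) ↦ (m, n)_ℂ = mi + n` of `ℤ²` onto the Gaussian integers in `ℂ`. -/
noncomputable def latticePoint (v : ℤ × ℤ) : ℂ :=
  v.1 * Complex.I + v.2

/-- The determinant `m₁n₂ - m₂n₁` of a pair of vectors in `ℤ²`, which is the coboundary of `c0`. -/
def latticeDet (v w : ℤ × ℤ) : ℤ :=
  v.1 * w.2 - w.1 * v.2

theorem g_add (v w : ℤ × ℤ) : g (v + w) = g v + g w :=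
  Prod.ext rfl (neg_add v.1 w.1)

theorem g_g (v : ℤ × ℤ) : g (g v) = -v :=
  rfl

theorem latticePoint_g (v : ℤ × ℤ) : latticePoint (g v) = Complex.I * latticePoint v := by
  simp only [latticePoint, g, Int.cast_neg]
  linear_combination -(v.1 : ℂ) * Complex.I_mul_I

theorem latticeDet_g_g (v w : ℤ × ℤ) : latticeDet (g v) (g w) = latticeDet v w := by
  simp only [latticeDet, g]
  ring

theorem coboundary_c0 :
    coboundary latticePoint (uncurry c0) = fun (v, w, _) ↦ (latticeDet v w : ℂ) := by
  funext ⟨v, w, z⟩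
  simp only [coboundary, uncurry_apply_pair, c0, latticePoint, latticeDet, Prod.fst_add,
    Prod.snd_add]
  push_cast
  ring

/-- The diagonal action of the generator of `ℤ/4` on `ℤ² × ℂ`; averaging `c0` over its orbits
gives `c`. -/
noncomputable abbrev quarterTurn : (ℤ × ℤ) × ℂ → (ℤ × ℤ) × ℂ :=
  Prod.map g (Complex.I * ·)

theorem isPeriodicPt_quarterTurn (p : (ℤ × ℤ) × ℂ) : IsPeriodicPt quarterTurn 4 p := by
  refine Prod.ext ?_ ?_
  · simp [g_g]
  · simp [← mul_assoc]

theorem uncurry_c_eq_birkhoffAverage :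
    uncurry c = birkhoffAverage ℂ quarterTurn (uncurry c0) 4 := by
  funext ⟨v, z⟩
  simp [c, birkhoffAverage, birkhoffSum, Finset.sum_range_succ]

theorem c_g_I_mul (v : ℤ × ℤ) (z : ℂ) : c (g v) (Complex.I * z) = c v z := by
  have quarterTurn_invariant :=
    birkhoffAverage_apply_of_isPeriodicPt ℂ (isPeriodicPt_quarterTurn (v, z)) (uncurry c0)
  rwa [← uncurry_c_eq_birkhoffAverage] at quarterTurn_invariant

theorem coboundary_c :
    coboundary latticePoint (uncurry c) = fun (v, w, _) ↦ (latticeDet v w : ℂ) := by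
  have I_mul_add_latticePoint (v : ℤ × ℤ) (z : ℂ) :
      Complex.I * (z + latticePoint v) = Complex.I * z + latticePoint (g v) := by
    rw [mul_add, latticePoint_g]
  rw [uncurry_c_eq_birkhoffAverage, coboundary_birkhoffAverage ℂ g_add I_mul_add_latticePoint,
    coboundary_c0]
  refine birkhoffAverage_of_comp_eq ℂ ?_ (by norm_num)
  funext ⟨v, w, _⟩
  exact congrArg Int.cast (latticeDet_g_g v w)

/-- The averaged functions `c` are `G`-invariant, `c_{g·v}(iz) = c_v(z)`, and satisfy the
cocycle identity `c_{v₁}(z) + c_{v₂}(z + m₁i + n₁) - c_{v₁+v₂}(z) = m₁n₂ - m₂n₁`. -/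
theorem stmt16 :
    (∀ (v : ℤ × ℤ) (z : ℂ), c (g v) (Complex.I * z) = c v z) ∧
    (∀ (m₁ n₁ m₂ n₂ : ℤ) (z : ℂ),
      c (m₁, n₁) z + c (m₂, n₂) (z + (m₁ : ℂ) * Complex.I + (n₁ : ℂ))
        - c (m₁ + m₂, n₁ + n₂) z
        = ((m₁ * n₂ - m₂ * n₁ : ℤ) : ℂ)) := by
  refine ⟨c_g_I_mul, fun m₁ n₁ m₂ n₂ z ↦ ?_⟩
  rw [add_assoc z]
  exact congrFun coboundary_c ((m₁, n₁), (m₂, n₂), z)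
end

section
/- Let M be a right B-module, where B = A∗G is the skew group ring of a finite group G acting on a ring A with |G| invertible in A. Then M is projective as a right B-module if and only if M is projective as a right A-module (under restriction of scalars along the inclusion A → B). -/
/-!
A right `B`-module is a left module over `Bᵐᵒᵖ`, and `Bᵐᵒᵖ` is again a skew group ring, of `G`
over `Aᵐᵒᵖ`, with `g ↦ op (u g⁻¹)` in place of `u`. So let `S` be a skew group ring of `G` over
`R` and `M` a left `S`-module.

If `M` is projective over `S`, it is projective over `R` because `S` is free over `R`. Conversely,
if `M` is projective over `R`, the free cover `p : (M →₀ S) → M` has an `R`-linear section `f`.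
As in Maschke's theorem, the sum over `g` of the conjugates `u g ∘ f ∘ u g⁻¹` is `S`-linear, and
composing it with `p` gives multiplication by `|G|`, which is invertible, so `p` splits over `S`.
-/

section Module

open Module

variable {R S M N ι : Type*} [Semiring R] [Semiring S] [AddCommMonoid M] [AddCommMonoid N]

theorem exists_basis_of_existsUnique_sum [Module R M] [Fintype ι] (v : ι → M)
    (hv : ∀ m, ∃! c : ι → R, m = ∑ i, c i • v i) : ∃ b : Basis ι R M, ⇑b = v := by
  classical
  have hbij : Function.Bijective (Fintype.linearCombination R v) :=
    (Function.bijective_iff_existsUnique _).2 fun m ↦ by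
      simpa only [Fintype.linearCombination_apply, eq_comm] using hv m
  refine ⟨.ofEquivFun (LinearEquiv.ofBijective _ hbij).symm, funext fun i ↦ ?_⟩
  simp [Fintype.linearCombination_apply_single]

theorem map_smul_of_span_range_eq_top [Module R S] [Module S M] [Module S N] [Module R M]
    [Module R N] [IsScalarTower R S M] [IsScalarTower R S N] {v : ι → S}
    (hspan : Submodule.span R (Set.range v) = ⊤) (f : M →ₗ[R] N)
    (hf : ∀ i m, f (v i • m) = v i • f m) (s : S) (m : M) : f (s • m) = s • f m := by
  have hs : s ∈ Submodule.span R (Set.range v) := hspan ▸ Submodule.mem_top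
  induction hs using Submodule.span_induction with
  | mem x hx => obtain ⟨i, rfl⟩ := hx; exact hf i m
  | zero => simp only [zero_smul, map_zero]
  | add x y _ _ hx hy => simp only [add_smul, map_add, hx, hy]
  | smul r x _ hx => simp only [smul_assoc, map_smul, hx]

theorem smul_smul_of_mul_smul_one [Module R S] [Module S M] [Module R M] [IsScalarTower R S M]
    {s : S} {r r' : R} (h : s * r • 1 = r' • s) (m : M) : s • r • m = r' • s • m := by
  rw [← one_smul S m, ← smul_assoc r, ← mul_smul, h, smul_assoc, one_smul]

theorem projective_finsupp [Module R M] [Projective R M] : Projective R (ι →₀ M) := by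
  classical exact .of_equiv' (finsuppLequivDFinsupp R).symm

variable (S) in
theorem projective_restrictScalars [Module R S] [Module S M] [Module R M] [IsScalarTower R S S]
    [IsScalarTower R S M] [Projective R S] [Projective S M] : Projective R M := by
  obtain ⟨s, hs⟩ := projective_def'.1 ‹Projective S M›
  have : Projective R (M →₀ S) := projective_finsupp
  exact .of_split (s.restrictScalars R) ((Finsupp.linearCombination S id).restrictScalars R)
    (LinearMap.ext fun m ↦ LinearMap.congr_fun hs m)

end Module

section SumConj

variable {R S G M N : Type*} [Semiring S] [Group G] [Fintype G]
  [AddCommMonoid M] [AddCommMonoid N] [Module S M] [Module S N]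

/-- The sum over `g : G` of the conjugates `u g ∘ f ∘ u g⁻¹` of an additive map `f` between
modules over `S`, on which `G` acts through `u : G →* S`. It turns `R`-linear maps into
`S`-linear ones when `S` is a skew group ring of `G` over `R`, and generalizes
`LinearMap.sumOfConjugates`, which is specific to group algebras over commutative rings. -/
def sumConj (u : G →* S) (f : M →+ N) : M →+ N where
  toFun m := ∑ g, u g • f (u g⁻¹ • m)
  map_zero' := by simp
  map_add' m m' := by simp [Finset.sum_add_distrib]

variable (u : G →* S)

theorem sumConj_apply (f : M →+ N) (m : M) : sumConj u f m = ∑ g, u g • f (u g⁻¹ • m) := rfl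

theorem sumConj_map_smul (f : M →+ N) (h : G) (m : M) :
    sumConj u f (u h • m) = u h • sumConj u f m := by
  simp only [sumConj_apply, Finset.smul_sum]
  refine Fintype.sum_equiv (Equiv.mulLeft h⁻¹) _ _ fun g ↦ ?_
  simp [smul_smul, ← map_mul]

theorem map_sumConj_of_rightInverse (p : N →ₗ[S] M) (f : M →+ N) (hf : ∀ m, p (f m) = m) (m : M) :
    p (sumConj u f m) = (Fintype.card G : S) • m := by
  simp [sumConj_apply, hf, smul_smul, ← map_mul, Nat.cast_smul_eq_nsmul]

variable {u} [Semiring R] [MulAction G R] [Module R S] [Module R M] [Module R N]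
  [IsScalarTower R S M] [IsScalarTower R S N]

theorem sumConj_map_smul_of_linearMap (hcomm : ∀ g (r : R), u g * r • 1 = (g • r) • u g)
    (f : M →ₗ[R] N) (r : R) (m : M) :
    sumConj u f.toAddMonoidHom (r • m) = r • sumConj u f.toAddMonoidHom m := by
  simp [sumConj_apply, Finset.smul_sum, smul_smul_of_mul_smul_one (hcomm _ _)]

/-- The sum of the conjugates of an `R`-linear map as an `S`-linear map, for a ring `S` that is
spanned over `R` by elements `u g` commuting with the scalars up to the action of `G` on `R`. -/
def sumConjLinear (hcomm : ∀ g (r : R), u g * r • 1 = (g • r) • u g)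
    (hspan : Submodule.span R (Set.range u) = ⊤) (f : M →ₗ[R] N) : M →ₗ[S] N where
  __ := sumConj u f.toAddMonoidHom
  map_smul' := map_smul_of_span_range_eq_top hspan
    { sumConj u f.toAddMonoidHom with map_smul' := sumConj_map_smul_of_linearMap hcomm f }
    (sumConj_map_smul u f.toAddMonoidHom)

theorem exists_rightInverse_of_isUnit_card (hcard : IsUnit (Fintype.card G : S))
    (hcomm : ∀ g (r : R), u g * r • 1 = (g • r) • u g)
    (hspan : Submodule.span R (Set.range u) = ⊤) (p : N →ₗ[S] M) (f : M →ₗ[R] N)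
    (hf : ∀ m, p (f m) = m) : ∃ t : M →ₗ[S] N, p ∘ₗ t = LinearMap.id := by
  let T := sumConjLinear hcomm hspan f
  have hpT : ⇑(p ∘ₗ T) = ((Fintype.card G : S) • ·) :=
    funext (map_sumConj_of_rightInverse u p f.toAddMonoidHom hf)
  let e := LinearEquiv.ofBijective (p ∘ₗ T) (hpT ▸ hcard.smul_bijective)
  exact ⟨T ∘ₗ e.symm, LinearMap.ext e.apply_symm_apply⟩

theorem projective_of_projective_restrictScalars [IsScalarTower R S S]
    (hcard : IsUnit (Fintype.card G : S))
    (hcomm : ∀ g (r : R), u g * r • 1 = (g • r) • u g)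
    (hspan : Submodule.span R (Set.range u) = ⊤) [Module.Projective R M] :
    Module.Projective S M := by
  refine .of_lifting_property'' fun p hp ↦ ?_
  obtain ⟨f, hf⟩ := Module.projective_lifting_property (p.restrictScalars R) .id hp
  exact exists_rightInverse_of_isUnit_card hcard hcomm hspan p f (LinearMap.congr_fun hf)

end SumConj

section SkewGroupRing

open MulOpposite

instance {R G : Type*} [Semiring R] [Monoid G] [MulSemiringAction G R] :
    MulSemiringAction G Rᵐᵒᵖ where
  smul_one := smul_one
  smul_mul := smul_mul'

variable {R S G : Type*} [Semiring R] [Semiring S] [Group G] [Fintype G] [MulSemiringAction G R]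

/-- `S` is a skew group ring `R∗G`, where `φ` is the embedding of the coefficients and `u g` are
the basis elements. The unit and the product of the `u g` are encoded in `u` being a monoid
homomorphism. -/
structure IsSkewGroupRing (φ : R →+* S) (u : G →* S) : Prop where
  mul_map : ∀ g r, u g * φ r = φ (g • r) * u g
  existsUnique_sum : ∀ s, ∃! c : G → R, s = ∑ g, φ (c g) * u g

namespace IsSkewGroupRing

variable {φ : R →+* S} {u : G →* S}

theorem op (h : IsSkewGroupRing φ u) :
    IsSkewGroupRing φ.op (u.op.comp (MulEquiv.inv' G).toMonoidHom) where
  mul_map g r := unop_injective <| by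
    simpa using (h.mul_map g⁻¹ (g • unop r)).symm
  existsUnique_sum s := by
    let e : (G → Rᵐᵒᵖ) ≃ (G → R) :=
      Equiv.piCongr (Equiv.inv G) fun g ↦ opEquiv.symm.trans (MulAction.toPerm g⁻¹)
    refine (e.existsUnique_congr fun c ↦ ?_).2 (h.existsUnique_sum (unop s))
    have he (g : G) : e c g⁻¹ = g⁻¹ • unop (c g) := Equiv.piCongr_apply_apply ..
    rw [← unop_inj, ← Equiv.sum_comp (Equiv.inv G) fun g ↦ φ (e c g) * u g]
    simp [he, h.mul_map]

theorem projective_iff (h : IsSkewGroupRing φ u) (hcard : IsUnit (Fintype.card G : R))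
    (M : Type*) [AddCommMonoid M] [Module S M] :
    letI : Module R M := Module.compHom M φ
    Module.Projective S M ↔ Module.Projective R M := by
  let : Module R M := Module.compHom M φ
  let : Module R S := φ.toModule
  have : IsScalarTower R S M := ⟨fun r s m ↦ mul_smul (φ r) s m⟩
  have : IsScalarTower R S S := ⟨fun r s t ↦ mul_assoc (φ r) s t⟩
  have hcomm (g : G) (r : R) : u g * r • 1 = (g • r) • u g := by
    simpa only [RingHom.toModule_smul, mul_one] using h.mul_map g r
  obtain ⟨b, hb⟩ := exists_basis_of_existsUnique_sum (R := R) u h.existsUnique_sum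
  have : Module.Projective R S := .of_basis b
  refine ⟨fun _ ↦ projective_restrictScalars S, fun _ ↦ ?_⟩
  exact projective_of_projective_restrictScalars (by simpa using hcard.map φ) hcomm
    (hb ▸ b.span_eq)

end IsSkewGroupRing

end SkewGroupRing

theorem stmt17_general (A B : Type*) [Semiring A] [Semiring B]
    (G : Type*) [Group G] [Fintype G] [MulSemiringAction G A]
    (hcard : IsUnit ((Fintype.card G : A)))
    (φ : A →+* B) (u : G → Bˣ)
    (hu : ∀ g g' : G, (u g : B) * (u g' : B) = (u (g * g') : B))
    (hcomm : ∀ (g : G) (a : A), (u g : B) * φ a = φ (g • a) * (u g : B))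
    (hbasis : ∀ b : B, ∃! c : G → A, b = ∑ g : G, φ (c g) * (u g : B))
    (M : Type*) [AddCommMonoid M] [Module Bᵐᵒᵖ M] :
    letI : Module Aᵐᵒᵖ M := Module.compHom M (RingHom.op φ)
    (Module.Projective Bᵐᵒᵖ M ↔ Module.Projective Aᵐᵒᵖ M) := by
  let v : G →* B := (Units.coeHom B).comp (MonoidHom.mk' u fun g g' ↦ Units.ext (hu g g').symm)
  have hB : IsSkewGroupRing φ v := ⟨hcomm, hbasis⟩
  have hcard_op : IsUnit (Fintype.card G : Aᵐᵒᵖ) := by simpa using hcard.op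
  exact hB.op.projective_iff hcard_op M

/-- Let `G` be a finite group acting on a ring `A` by ring automorphisms, with `|G|`
invertible in `A`, and let `B = A∗G` be the skew group ring: `B` contains `A` via the ring
homomorphism `φ`, contains units `u g` for `g ∈ G` with `u g * u g' = u (g * g')` and
`u g * φ a = φ (g • a) * u g`, and is free as a left `A`-module with basis `{u g}`, i.e.
every element of `B` is uniquely of the form `∑ g, φ (c g) * u g`.

Then a right `B`-module `M` (i.e. a left `Bᵐᵒᵖ`-module) is projective over `B` iff it is
projective over `A` under restriction of scalars along `φ : A → B`. -/
theorem stmt17 (A B : Type*) [Ring A] [Ring B]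
    (G : Type*) [Group G] [Fintype G] [MulSemiringAction G A]
    (hcard : IsUnit ((Fintype.card G : A)))
    (φ : A →+* B) (u : G → Bˣ)
    (hu : ∀ g g' : G, (u g : B) * (u g' : B) = (u (g * g') : B))
    (hcomm : ∀ (g : G) (a : A), (u g : B) * φ a = φ (g • a) * (u g : B))
    (hbasis : ∀ b : B, ∃! c : G → A, b = ∑ g : G, φ (c g) * (u g : B))
    (M : Type*) [AddCommGroup M] [Module Bᵐᵒᵖ M] :
    letI : Module Aᵐᵒᵖ M := Module.compHom M (RingHom.op φ)
    (Module.Projective Bᵐᵒᵖ M ↔ Module.Projective Aᵐᵒᵖ M) :=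
  stmt17_general A B G hcard φ u hu hcomm hbasis M
end
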